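/- Let Y be a real vector space. Every compatible partial preference ≺ on Y can be regularly extended to a compatible weak preference: there exists a compatible weak preference ≺' on Y such that P_≺ ⊆ P_{≺'} and L_≺ ⊆ L_{≺'} (equivalently, y ≺ z implies y ≺' z, and z − y ∈ L_≺ implies z − y ∈ L_{≺'}). -/

import Mathlib

open Pointwise

variable {Y : Type*} [AddCommGroup Y] [Module ℝ Y]

/-- The positive cone of a binary relation: `{y | 0 ≺ y}`. -/
def posCone (r : Y → Y → Prop) : Set Y := {y | r 0 y}

/-- A compatible partial preference: a binary relation compatible with the algebraic
operations which is asymmetric and transitive. -/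
structure IsCompatiblePartialPreference (r : Y → Y → Prop) : Prop where
  smul_compat : ∀ ⦃y₁ y₂ : Y⦄ ⦃l : ℝ⦄, 0 < l → r y₁ y₂ → r (l • y₁) (l • y₂)
  add_compat : ∀ ⦃y₁ y₂ : Y⦄ (y : Y), r y₁ y₂ → r (y₁ + y) (y₂ + y)
  asymm : ∀ ⦃y₁ y₂ : Y⦄, r y₁ y₂ → ¬ r y₂ y₁
  trans : ∀ ⦃y₁ y₂ y₃ : Y⦄, r y₁ y₂ → r y₂ y₃ → r y₁ y₃

/-- A compatible weak preference: a compatible partial preference whose indifference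
relation (`y ≍ z` iff neither `y ≺ z` nor `z ≺ y`) is transitive. -/
structure IsCompatibleWeakPreference (r : Y → Y → Prop)
    extends IsCompatiblePartialPreference r : Prop where
  indiff_trans : ∀ ⦃y z u : Y⦄, ¬ r y z → ¬ r z y → ¬ r z u → ¬ r u z → ¬ r y u ∧ ¬ r u y

/-- The majorization relation on the positive cone: `y ⊴ z` iff `μ • y ≺ z` for some `μ > 0`. -/
def maj (r : Y → Y → Prop) (y z : Y) : Prop := ∃ μ : ℝ, 0 < μ ∧ r (μ • y) z

/-- The equivalence `y ≖ z` : `y ⊴ z` and `z ⊴ y`. -/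
def majEquiv (r : Y → Y → Prop) (y z : Y) : Prop := maj r y z ∧ maj r z y

/-- The `≖`-equivalence class of `y` inside the positive cone. -/
def componentOf (r : Y → Y → Prop) (y : Y) : Set Y := {z ∈ posCone r | majEquiv r z y}

/-- Open components of the positive cone: the equivalence classes of `≖`. -/
def IsOpenComponent (r : Y → Y → Prop) (E : Set Y) : Prop :=
  ∃ y ∈ posCone r, E = componentOf r y

/-- The order `⊴*` on open components: `E₁ ⊴* E₂` iff `y₁ ⊴ y₂` for all `y₁ ∈ E₁`, `y₂ ∈ E₂`. -/
def compLE (r : Y → Y → Prop) (E₁ E₂ : Set Y) : Prop :=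
  ∀ y₁ ∈ E₁, ∀ y₂ ∈ E₂, maj r y₁ y₂

/-- The relative algebraic interior (intrinsic core) of a (convex) set. -/
def icr (Q : Set Y) : Set Y :=
  {z ∈ Q | ∀ y ∈ Q, ∃ δ : ℝ, 0 < δ ∧ ∀ t : ℝ, -δ < t → t < δ → z + t • (y - z) ∈ Q}

/-- The algebraic interior (core) of a set. -/
def algCr (Q : Set Y) : Set Y :=
  {z ∈ Q | ∀ y : Y, ∃ δ : ℝ, 0 < δ ∧ ∀ t : ℝ, -δ < t → t < δ → z + t • (y - z) ∈ Q}

/-- The vector space associated with a convex cone `K`: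
`L_K = {h | y + t•h ∈ K for all y ∈ K, t ∈ ℝ}`. -/
def assocSubspace (K : Set Y) : Set Y := {h | ∀ y ∈ K, ∀ t : ℝ, y + t • h ∈ K}

/-- A cone: a set closed under multiplication by positive reals. -/
def IsConeSet (K : Set Y) : Prop := ∀ y ∈ K, ∀ l : ℝ, 0 < l → l • y ∈ K

/-- A face of a convex set `Q`: a nonempty convex subset `F ⊆ Q` such that whenever a point
`α•u + (1-α)•v` (with `u, v ∈ Q`, `0 < α < 1`) lies in `F`, both `u` and `v` lie in `F`. -/
def IsFaceOf (Q F : Set Y) : Prop :=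
  F.Nonempty ∧ Convex ℝ F ∧ F ⊆ Q ∧
    ∀ u ∈ Q, ∀ v ∈ Q, ∀ α : ℝ, 0 < α → α < 1 → α • u + (1 - α) • v ∈ F → u ∈ F ∧ v ∈ F

/-- `F_y`: the members of the family `F` not vanishing at `y`. -/
def Fy (F : Set (Y →ₗ[ℝ] ℝ)) (y : Y) : Set (Y →ₗ[ℝ] ℝ) := {φ ∈ F | φ y ≠ 0}

/-- `φ` is the least element of `S` with respect to `le`. -/
def IsLeastWrt (le : (Y →ₗ[ℝ] ℝ) → (Y →ₗ[ℝ] ℝ) → Prop) (S : Set (Y →ₗ[ℝ] ℝ))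
    (φ : Y →ₗ[ℝ] ℝ) : Prop :=
  φ ∈ S ∧ ∀ ψ ∈ S, le φ ψ

/-- A cortege of linear functions on `Y`: a family `F` of linear functions linearly ordered
by `le` such that every nonempty `F_y` has a least element `φ_y`, and every `φ ∈ F` is `φ_y`
for some `y`. -/
structure IsCortege (F : Set (Y →ₗ[ℝ] ℝ))
    (le : (Y →ₗ[ℝ] ℝ) → (Y →ₗ[ℝ] ℝ) → Prop) : Prop where
  refl : ∀ φ ∈ F, le φ φ
  antisymm : ∀ φ ∈ F, ∀ ψ ∈ F, le φ ψ → le ψ φ → φ = ψ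
  trans : ∀ φ ∈ F, ∀ ψ ∈ F, ∀ χ ∈ F, le φ ψ → le ψ χ → le φ χ
  total : ∀ φ ∈ F, ∀ ψ ∈ F, le φ ψ ∨ le ψ φ
  least_exists : ∀ y : Y, Fy F y = ∅ ∨ ∃ φ, IsLeastWrt le (Fy F y) φ
  surj : ∀ φ ∈ F, ∃ y : Y, IsLeastWrt le (Fy F y) φ

/-- A step-linear function: `u(y) = 0` if `F_y = ∅` and `u(y) = φ_y(y)` otherwise,
for some cortege `(F, le)`. -/
def IsStepLinear (u : Y → ℝ) : Prop :=
  ∃ (F : Set (Y →ₗ[ℝ] ℝ)) (le : (Y →ₗ[ℝ] ℝ) → (Y →ₗ[ℝ] ℝ) → Prop),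
    IsCortege F le ∧
      ∀ y : Y, (Fy F y = ∅ ∧ u y = 0) ∨ ∃ φ, IsLeastWrt le (Fy F y) φ ∧ u y = φ y

/-!
A total pointed cone `D` (one with `D ∪ -D = Y`) is a total preorder `x ≤ y ↔ y - x ∈ D`, whose
strict part is a compatible weak preference; its indifference classes are the cosets of the
lineality space `D ∩ -D`. The recession cone of `P_≺` is a pointed cone which contains `P_≺` and
has lineality space `L_≺`. By Zorn's lemma it lies in a pointed cone maximal among those with the
same lineality space, and a maximal such cone is total: adjoining `y` enlarges the lineality space
only if `-y` already belongs to the cone.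
-/

section LinealityPreservingExtension

open PointedCone

theorem lineal_sSup_of_directedOn {R E : Type*} [Ring R] [LinearOrder R] [IsOrderedRing R]
    [AddCommGroup E] [Module R E] {S : Set (PointedCone R E)} {L : Submodule R E}
    (hne : S.Nonempty) (hdir : DirectedOn (· ≤ ·) S) (hL : ∀ D ∈ S, D.lineal = L) :
    (sSup S).lineal = L := by
  ext x
  simp only [mem_lineal, Submodule.mem_sSup_of_directed hne hdir]
  constructor
  · rintro ⟨⟨D₁, hD₁, hx⟩, D₂, hD₂, hneg⟩
    obtain ⟨D, hD, hD₁D, hD₂D⟩ := hdir D₁ hD₁ D₂ hD₂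
    exact hL D hD ▸ mem_lineal.2 ⟨hD₁D hx, hD₂D hneg⟩
  · intro hx
    obtain ⟨D, hD⟩ := hne
    obtain ⟨hxD, hnegD⟩ := mem_lineal.1 ((hL D hD).symm ▸ hx)
    exact ⟨⟨D, hD, hxD⟩, D, hD, hnegD⟩

variable {𝕜 E : Type*} [Field 𝕜] [LinearOrder 𝕜] [IsStrictOrderedRing 𝕜]
  [AddCommGroup E] [Module 𝕜 E]

theorem mem_sup_hull_singleton {C : PointedCone 𝕜 E} {x y : E} :
    x ∈ C ⊔ hull 𝕜 {y} ↔ ∃ a ∈ C, ∃ t : 𝕜, 0 ≤ t ∧ a + t • y = x := by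
  simp [Submodule.mem_sup, Submodule.mem_span_singleton]

theorem lineal_sup_hull_singleton {C : PointedCone 𝕜 E} {y : E} (hy : -y ∉ C) :
    (C ⊔ hull 𝕜 {y}).lineal = C.lineal := by
  refine le_antisymm (fun x hx ↦ ?_) fun x hx ↦
    ⟨Submodule.mem_sup_left hx.1, Submodule.mem_sup_left hx.2⟩
  obtain ⟨a, ha, t, ht, hax⟩ := mem_sup_hull_singleton.1 hx.1
  obtain ⟨b, hb, s, hs, hbx⟩ := mem_sup_hull_singleton.1 hx.2
  have hsum : a + b = (t + s) • -y := by
    rw [eq_sub_of_add_eq hax, eq_sub_of_add_eq hbx]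
    module
  have hts : t + s = 0 := by
    by_contra hne
    have hpos : 0 < t + s := (add_nonneg ht hs).lt_of_ne' hne
    exact hy ((C.smul_mem_iff hpos).1 (hsum ▸ C.add_mem ha hb))
  obtain ⟨rfl, rfl⟩ := (add_eq_zero_iff_of_nonneg ht hs).1 hts
  rw [zero_smul, add_zero] at hax hbx
  exact mem_lineal.2 ⟨hax ▸ ha, hbx ▸ hb⟩

theorem exists_hasMemOrNegMem_lineal_eq (C : PointedCone 𝕜 E) :
    ∃ D : PointedCone 𝕜 E, C ≤ D ∧ D.lineal = C.lineal ∧ HasMemOrNegMem D := by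
  obtain ⟨D, hCD, hD⟩ := zorn_le_nonempty₀ {D : PointedCone 𝕜 E | D.lineal = C.lineal}
    (fun S hS hchain _ hmem ↦
      ⟨sSup S, lineal_sSup_of_directedOn ⟨_, hmem⟩ hchain.directedOn hS, fun _ ↦ le_sSup⟩) C rfl
  refine ⟨D, hCD, hD.prop, ⟨fun y ↦ or_iff_not_imp_right.2 fun hy ↦ ?_⟩⟩
  have hle : D ⊔ hull 𝕜 {y} ≤ D :=
    hD.le_of_ge ((lineal_sup_hull_singleton hy).trans hD.prop) le_sup_left
  exact hle (Submodule.mem_sup_right (Submodule.mem_span_singleton_self y))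

end LinealityPreservingExtension

section RecessionCone

variable {𝕜 E : Type*} [Field 𝕜] [LinearOrder 𝕜] [IsStrictOrderedRing 𝕜]
  [AddCommGroup E] [Module 𝕜 E]

/-- The recession cone `{x | K + x ⊆ K}` of a convex cone `K`. As `K` is closed under positive
scalars, translation by `x` itself, rather than by all `t • x` with `0 ≤ t`, is enough. -/
def recessionCone (K : ConvexCone 𝕜 E) : PointedCone 𝕜 E where
  carrier := {x | ∀ z ∈ K, z + x ∈ K}
  zero_mem' z hz := by simpa using hz
  add_mem' {x y} hx hy z hz := by simpa only [add_assoc] using hy _ (hx z hz)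
  smul_mem' := by
    rintro ⟨c, hc⟩ x hx z hz
    change z + c • x ∈ K
    obtain rfl | hc := hc.eq_or_lt
    · simpa using hz
    · have hscaled : c • (c⁻¹ • z + x) ∈ K :=
        K.smul_mem hc (hx _ (K.smul_mem (inv_pos.2 hc) hz))
      rwa [smul_add, smul_inv_smul₀ hc.ne'] at hscaled

theorem mem_recessionCone {K : ConvexCone 𝕜 E} {x : E} :
    x ∈ recessionCone K ↔ ∀ z ∈ K, z + x ∈ K := .rfl

theorem mem_recessionCone_of_mem {K : ConvexCone 𝕜 E} {x : E} (hx : x ∈ K) :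
    x ∈ recessionCone K :=
  mem_recessionCone.2 fun _ hz ↦ K.add_mem hz hx

theorem neg_notMem_recessionCone {K : ConvexCone 𝕜 E} (hK : K.Blunt) {x : E} (hx : x ∈ K) :
    -x ∉ recessionCone K :=
  fun hneg ↦ hK (add_neg_cancel x ▸ mem_recessionCone.1 hneg x hx)

theorem coe_lineal_recessionCone (K : ConvexCone ℝ Y) :
    ((recessionCone K).lineal : Set Y) = assocSubspace (K : Set Y) := by
  ext h
  refine ⟨fun hh y hy t ↦ ((recessionCone K).lineal.smul_mem t hh).1 y hy, fun hh ↦ ⟨?_, ?_⟩⟩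
  · exact fun y hy ↦ by simpa using hh y hy 1
  · exact fun y hy ↦ by simpa using hh y hy (-1)

end RecessionCone

/-- The positive cone of a compatible partial preference as a bundled convex cone. -/
def IsCompatiblePartialPreference.convexCone {r : Y → Y → Prop}
    (h : IsCompatiblePartialPreference r) : ConvexCone ℝ Y where
  carrier := posCone r
  smul_mem' c hc y hy := by simpa [posCone] using h.smul_compat hc hy
  add_mem' x hx y hy := h.trans hy (by simpa using h.add_compat y hx)

theorem IsCompatiblePartialPreference.blunt_convexCone {r : Y → Y → Prop}
    (h : IsCompatiblePartialPreference r) : h.convexCone.Blunt :=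
  fun h0 ↦ h.asymm h0 h0

section StrictPreference

/-- The strict part of the preorder `x ≤ y ↔ y - x ∈ D` of a total cone `D`. By totality `x < y`
amounts to the failure of `y ≤ x`, which is taken as the definition. -/
def strictPref (D : PointedCone ℝ Y) (x y : Y) : Prop := x - y ∉ D

variable {D : PointedCone ℝ Y}

theorem mem_posCone_strictPref {y : Y} : y ∈ posCone (strictPref D) ↔ -y ∉ D := by
  simp [posCone, strictPref]

theorem isCompatibleWeakPreference_strictPref [HasMemOrNegMem D] :
    IsCompatibleWeakPreference (strictPref D) where
  smul_compat x y l hl hxy := by rwa [strictPref, ← smul_sub, D.smul_mem_iff hl]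
  add_compat x y z hxy := by rwa [strictPref, add_sub_add_right_eq_sub]
  asymm x y hxy hyx := by
    have hmem : x - y ∈ D ∨ y - x ∈ D := by simpa using mem_or_neg_mem D (x - y)
    exact hmem.elim hxy hyx
  trans x y z hxy hyz hxz := by
    have hzy : z - y ∈ D := by simpa using (mem_or_neg_mem D (y - z)).resolve_left hyz
    exact hxy (by simpa using D.add_mem hxz hzy)
  indiff_trans x y z hxy hyx hyz hzy := by
    simp only [strictPref, not_not] at *
    exact ⟨by simpa using D.add_mem hxy hyz, by simpa using D.add_mem hzy hyx⟩

theorem lineal_subset_assocSubspace_posCone_strictPref :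
    (D.lineal : Set Y) ⊆ assocSubspace (posCone (strictPref D)) := by
  intro h hh y hy t
  rw [mem_posCone_strictPref] at hy ⊢
  intro hmem
  have hth : t • h ∈ D := (D.lineal.smul_mem t hh).1
  exact hy (by simpa using D.add_mem hth hmem)

end StrictPreference

/-- Every compatible partial preference can be regularly extended to a
compatible weak preference: `P_≺ ⊆ P_≺'` and `L_≺ ⊆ L_≺'`. -/
theorem stmt_18 (r : Y → Y → Prop) (h : IsCompatiblePartialPreference r) :
    ∃ r' : Y → Y → Prop, IsCompatibleWeakPreference r' ∧
      posCone r ⊆ posCone r' ∧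
      assocSubspace (posCone r) ⊆ assocSubspace (posCone r') := by
  obtain ⟨D, hle, hlineal, hD⟩ := exists_hasMemOrNegMem_lineal_eq (recessionCone h.convexCone)
  refine ⟨strictPref D, isCompatibleWeakPreference_strictPref, fun y hy ↦ ?_, ?_⟩
  · have hy_mem : y ∈ D := hle (mem_recessionCone_of_mem hy)
    refine mem_posCone_strictPref.2 fun hneg ↦ neg_notMem_recessionCone h.blunt_convexCone hy ?_
    have hy_lineal : y ∈ (recessionCone h.convexCone).lineal := hlineal ▸ ⟨hy_mem, hneg⟩
    exact hy_lineal.2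
  · calc assocSubspace (posCone r)
        = (recessionCone h.convexCone).lineal := (coe_lineal_recessionCone h.convexCone).symm
      _ = D.lineal := congrArg _ hlineal.symm
      _ ⊆ assocSubspace (posCone (strictPref D)) := lineal_subset_assocSubspace_posCone_strictPref
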